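/- arXiv:2604.25739 — 2 statements merged into one kernel-verified Lean document; each statement's English description precedes it below -/
import Mathlib

section
/- For every e ∈ ℝ⁴ with ‖e‖ = 1, the function (x₂, x₃, x₄) ↦ 1/(‖x₂‖²‖x₃‖²‖x₄‖²‖e − x₂‖²‖x₂ − x₃‖²‖x₃ − x₄‖²‖x₄ − e‖²) is Lebesgue integrable on (ℝ⁴)³ and (1/π⁶) ∫_{(ℝ⁴)³} dx₂ dx₃ dx₄ / (‖x₂‖²‖x₃‖²‖x₄‖²‖e − x₂‖²‖x₂ − x₃‖²‖x₃ − x₄‖²‖x₄ − e‖²) = 20ζ(5). -/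
open MeasureTheory

open Real Set
open scoped ENNReal

/-!
In log-polar coordinates `x = exp t • ω`, `y = exp s • η` the propagator satisfies
`‖x - y‖ ^ 2 = ‖x‖ * ‖y‖ * (2 * cosh (t - s) - 2 * cos θ)`, where `θ` is the angle between `ω` and
`η`. Hence `1 / ‖x - y‖ ^ 2` is a convolution kernel on the cylinder `ℝ × S³`, and it is
diagonalized by the modes `exp (-(N * |t - s|)) * sin (N * θ) / sin θ`, `N ≥ 1`.

Integrating out the two rim vertices adjacent to `e` turns the wheel into `∫ ‖x‖⁻² Φ(x)²`, where
`Φ` is the one-loop box function with external points `0`, `e`, `x` and `∞`. Its `N`-th mode is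
`1 / N` times the convolution square `(1 / N + |T|) * exp (-(N * |T|))` of the Laplace kernel.
By Parseval in the angle, the wheel is a sum over `N` of the integrals over `T` of the squared
modes; each of these integrals is `5 / (2 * N ^ 5)`, and the volume factors combine to `8 * π ^ 6`.
-/

section Coordinates

theorem lintegral_Ioo_ofReal {a b : ℝ} (hab : a ≤ b) {f : ℝ → ℝ} (hf : Continuous f)
    (hf₀ : ∀ x ∈ Ioo a b, 0 ≤ f x) :
    ∫⁻ x in Ioo a b, ENNReal.ofReal (f x) = ENNReal.ofReal (∫ x in a..b, f x) := by
  rw [intervalIntegral.integral_of_le hab, integral_Ioc_eq_integral_Ioo,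
    ofReal_integral_eq_lintegral_ofReal (hf.integrableOn_Icc.mono_set Ioo_subset_Icc_self)
      (ae_restrict_of_forall_mem measurableSet_Ioo hf₀)]

theorem lintegral_polar {f : ℝ × ℝ → ℝ≥0∞} (hf : Measurable f) :
    ∫⁻ p, f p = ∫⁻ r in Ioi (0 : ℝ), ∫⁻ α in Ioo (-π) π,
      ENNReal.ofReal r * f (r * cos α, r * sin α) := by
  have hm : Measurable fun p : ℝ × ℝ => ENNReal.ofReal p.1 * f (p.1 * cos p.2, p.1 * sin p.2) := by
    fun_prop
  rw [← lintegral_comp_polarCoord_symm]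
  change ∫⁻ p in Ioi (0 : ℝ) ×ˢ Ioo (-π) π,
    ENNReal.ofReal p.1 * f (p.1 * cos p.2, p.1 * sin p.2) = _
  rw [Measure.volume_eq_prod, ← Measure.prod_restrict, lintegral_prod _ hm.aemeasurable]

theorem lintegral_comp_sq_add_sq {g : ℝ → ℝ≥0∞} (hg : Measurable g) :
    ∫⁻ c : ℝ, ∫⁻ d : ℝ, g (c ^ 2 + d ^ 2) =
      ENNReal.ofReal (2 * π) * ∫⁻ ρ in Ioi (0 : ℝ), ENNReal.ofReal ρ * g (ρ ^ 2) := by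
  have hm : Measurable fun p : ℝ × ℝ => g (p.1 ^ 2 + p.2 ^ 2) := by fun_prop
  have hsq (r α : ℝ) : (r * cos α) ^ 2 + (r * sin α) ^ 2 = r ^ 2 := by
    linear_combination r ^ 2 * cos_sq_add_sin_sq α
  rw [← lintegral_prod (fun p : ℝ × ℝ => g (p.1 ^ 2 + p.2 ^ 2)) hm.aemeasurable,
    ← Measure.volume_eq_prod, lintegral_polar hm, ← lintegral_const_mul _ (by fun_prop)]
  refine lintegral_congr fun r => ?_
  simp only [hsq, setLIntegral_const, Real.volume_Ioo]
  rw [mul_comm, show π - -π = 2 * π by ring]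

theorem lintegral_polar_upperHalfPlane {f : ℝ × ℝ → ℝ≥0∞} (hf : Measurable f) :
    ∫⁻ a : ℝ, ∫⁻ s in Ioi (0 : ℝ), f (a, s) =
      ∫⁻ r in Ioi (0 : ℝ), ∫⁻ α in Ioo 0 π, ENNReal.ofReal r * f (r * cos α, r * sin α) := by
  have hU : MeasurableSet {p : ℝ × ℝ | 0 < p.2} := measurableSet_lt (by fun_prop) (by fun_prop)
  calc ∫⁻ a : ℝ, ∫⁻ s in Ioi (0 : ℝ), f (a, s)
      = ∫⁻ p, {p : ℝ × ℝ | 0 < p.2}.indicator f p := by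
        rw [Measure.volume_eq_prod, lintegral_prod _ (hf.indicator hU).aemeasurable]
        refine lintegral_congr fun a => ?_
        rw [← lintegral_indicator measurableSet_Ioi]
        rfl
    _ = ∫⁻ r in Ioi (0 : ℝ), ∫⁻ α in Ioo (-π) π, (Ioo 0 π).indicator
          (fun α => ENNReal.ofReal r * f (r * cos α, r * sin α)) α := by
        rw [lintegral_polar (hf.indicator hU)]
        refine setLIntegral_congr_fun measurableSet_Ioi fun r hr =>
          setLIntegral_congr_fun measurableSet_Ioo fun α hα => ?_
        have hr : 0 < r := hr
        by_cases h : 0 < α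
        · have : 0 < r * sin α := mul_pos hr (sin_pos_of_pos_of_lt_pi h hα.2)
          simp [indicator, h, hα.2, this]
        · have : r * sin α ≤ 0 := mul_nonpos_of_nonneg_of_nonpos hr.le
            (sin_nonpos_of_nonpos_of_neg_pi_le (not_lt.mp h) hα.1.le)
          simp [indicator, h, this.not_gt]
    _ = _ := by
        refine lintegral_congr fun r => ?_
        rw [setLIntegral_indicator measurableSet_Ioo,
          inter_eq_left.mpr (Ioo_subset_Ioo_left (by linarith [pi_pos]))]

theorem lintegral_exp_subst (f : ℝ → ℝ≥0∞) :
    ∫⁻ r in Ioi (0 : ℝ), f r = ∫⁻ t : ℝ, ENNReal.ofReal (exp t) * f (exp t) := by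
  have h := lintegral_image_eq_lintegral_abs_deriv_mul MeasurableSet.univ
    (fun x _ => (hasDerivAt_exp x).hasDerivWithinAt) exp_injective.injOn f
  simpa only [image_univ, range_exp, Measure.restrict_univ, abs_exp] using h

theorem lintegral_fin_succ {n : ℕ} {f : (Fin (n + 1) → ℝ) → ℝ≥0∞} (hf : Measurable f) :
    ∫⁻ v, f v = ∫⁻ a : ℝ, ∫⁻ w : Fin n → ℝ, f (Fin.cons a w) := by
  let φ := (MeasurableEquiv.piFinSuccAbove (fun _ : Fin (n + 1) => ℝ) 0).symm
  have hφ := (volume_preserving_piFinSuccAbove (fun _ : Fin (n + 1) => ℝ) 0).symm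
  calc ∫⁻ v, f v = ∫⁻ p, f (φ p) := (hφ.lintegral_comp hf).symm
    _ = ∫⁻ a : ℝ, ∫⁻ w : Fin n → ℝ, f (φ (a, w)) := by
      rw [Measure.volume_eq_prod, lintegral_prod _ (by fun_prop)]
    _ = ∫⁻ a : ℝ, ∫⁻ w : Fin n → ℝ, f (Fin.cons a w) := by
      simp [φ, MeasurableEquiv.piFinSuccAbove_symm_apply, Fin.insertNthEquiv]

theorem lintegral_fin_four {f : (Fin 4 → ℝ) → ℝ≥0∞} (hf : Measurable f) :
    ∫⁻ v, f v = ∫⁻ (a : ℝ) (b : ℝ) (c : ℝ) (d : ℝ), f ![a, b, c, d] := by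
  have hcons {n : ℕ} {g : (Fin (n + 1) → ℝ) → ℝ≥0∞} (hg : Measurable g) (a : ℝ) :
      Measurable fun w : Fin n → ℝ => g (Fin.cons a w) :=
    hg.comp (measurable_pi_iff.mpr
      (Fin.cases (by simp) fun i => by simpa using measurable_pi_apply i))
  rw [lintegral_fin_succ hf]
  refine lintegral_congr fun a => ?_
  rw [lintegral_fin_succ (hcons hf a)]
  refine lintegral_congr fun b => ?_
  rw [lintegral_fin_succ (hcons (hcons hf a) b)]
  refine lintegral_congr fun c => ?_
  rw [lintegral_fin_succ (hcons (hcons (hcons hf a) b) c)]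
  refine lintegral_congr fun d => ?_
  rw [Measure.volume_pi_eq_dirac ![], lintegral_dirac]
  rfl

theorem lintegral_norm_coord_coord {F : ℝ × ℝ × ℝ → ℝ≥0∞} (hF : Measurable F) :
    ∫⁻ (a : ℝ) (b : ℝ) (c : ℝ) (d : ℝ), F (√(a ^ 2 + b ^ 2 + (c ^ 2 + d ^ 2)), a, b) =
      ENNReal.ofReal (2 * π) * ∫⁻ r in Ioi (0 : ℝ), ∫⁻ α in Ioo 0 π, ∫⁻ φ in Ioo 0 π,
        ENNReal.ofReal (r ^ 3 * sin α ^ 2 * sin φ) * F (r, r * cos α, r * sin α * cos φ) := by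
  have hpolar (a : ℝ) :
      ∫⁻ b : ℝ, ∫⁻ ρ in Ioi (0 : ℝ), ENNReal.ofReal ρ * F (√(a ^ 2 + b ^ 2 + ρ ^ 2), a, b) =
      ∫⁻ s in Ioi (0 : ℝ), ∫⁻ φ in Ioo 0 π, ENNReal.ofReal s *
        (ENNReal.ofReal (s * sin φ) * F (√(a ^ 2 + s ^ 2), a, s * cos φ)) := by
    rw [lintegral_polar_upperHalfPlane
      (f := fun p => ENNReal.ofReal p.2 * F (√(a ^ 2 + p.1 ^ 2 + p.2 ^ 2), a, p.1)) (by fun_prop)]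
    refine lintegral_congr fun s => lintegral_congr fun φ => ?_
    rw [show a ^ 2 + (s * cos φ) ^ 2 + (s * sin φ) ^ 2 = a ^ 2 + s ^ 2 by
      linear_combination s ^ 2 * cos_sq_add_sin_sq φ]
  have hm : Measurable fun p : ℝ × ℝ => ∫⁻ φ in Ioo 0 π, ENNReal.ofReal p.2 *
      (ENNReal.ofReal (p.2 * sin φ) * F (√(p.1 ^ 2 + p.2 ^ 2), p.1, p.2 * cos φ)) :=
    Measurable.lintegral_prod_right' (ν := volume.restrict (Ioo 0 π))
      (f := fun q : (ℝ × ℝ) × ℝ => ENNReal.ofReal q.1.2 * (ENNReal.ofReal (q.1.2 * sin q.2) *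
        F (√(q.1.1 ^ 2 + q.1.2 ^ 2), q.1.1, q.1.2 * cos q.2))) (by fun_prop)
  have hrad (a b : ℝ) := lintegral_comp_sq_add_sq
    (g := fun u => F (√(a ^ 2 + b ^ 2 + u), a, b)) (by fun_prop)
  simp_rw [hrad, lintegral_const_mul' _ _ ENNReal.ofReal_ne_top, hpolar]
  rw [lintegral_polar_upperHalfPlane hm]
  congr 1
  refine setLIntegral_congr_fun measurableSet_Ioi fun r hr =>
    setLIntegral_congr_fun measurableSet_Ioo fun α hα => ?_
  have hr : 0 < r := hr
  have hsin := sin_pos_of_mem_Ioo hα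
  rw [← lintegral_const_mul' _ _ ENNReal.ofReal_ne_top]
  refine lintegral_congr fun φ => ?_
  rw [show (r * cos α) ^ 2 + (r * sin α) ^ 2 = r ^ 2 by
    linear_combination r ^ 2 * cos_sq_add_sin_sq α, sqrt_sq hr.le, ← mul_assoc, ← mul_assoc,
    ← ENNReal.ofReal_mul hr.le, ← ENNReal.ofReal_mul (by positivity)]
  ring_nf

variable {E : Type*} [NormedAddCommGroup E] [InnerProductSpace ℝ E]

theorem exists_orthonormalBasis_apply_zero (hE : Module.finrank ℝ E = 4) {e : E} (he : ‖e‖ = 1) :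
    ∃ b : OrthonormalBasis (Fin 4) ℝ E, b 0 = e := by
  have : FiniteDimensional ℝ E := .of_finrank_pos (by omega)
  have h : Orthonormal ℝ (({0} : Set (Fin 4)).domRestrict fun _ => e) :=
    ⟨fun _ => he, fun i j hij => absurd (Subsingleton.elim i j) hij⟩
  obtain ⟨b, hb⟩ := h.exists_orthonormalBasis_extension_of_card_eq (by simpa using hE)
  exact ⟨b, hb 0 (mem_singleton 0)⟩

variable (b : OrthonormalBasis (Fin 4) ℝ E)

/-- The unit vector at angle `β` from the pole `b 0`, on the half-circle through `b 1`. -/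
noncomputable def meridian (β : ℝ) : E :=
  cos β • b 0 + sin β • b 1

theorem norm_smul_add_smul_sq (p q : ℝ) : ‖p • b 0 + q • b 1‖ ^ 2 = p ^ 2 + q ^ 2 := by
  simp [norm_add_sq_real, inner_smul_left, inner_smul_right, b.inner_eq_zero, norm_smul]

theorem norm_meridian (β : ℝ) : ‖meridian b β‖ = 1 := by
  rw [← sq_eq_sq₀ (norm_nonneg _) zero_le_one, meridian, norm_smul_add_smul_sq,
    cos_sq_add_sin_sq, one_pow]

theorem inner_meridian (β : ℝ) (y : E) :
    inner ℝ (meridian b β) y = cos β * inner ℝ (b 0) y + sin β * inner ℝ (b 1) y := by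
  simp [meridian, inner_add_left, inner_smul_left]

theorem norm_apply_zero_sub_sq (y : E) :
    ‖b 0 - y‖ ^ 2 = ‖y‖ ^ 2 - 2 * inner ℝ (b 0) y + 1 := by
  rw [norm_sub_sq_real, b.norm_eq_one]
  ring

theorem norm_smul_meridian_sub_sq {R : ℝ} (hR : 0 ≤ R) (β : ℝ) (y : E) :
    ‖R • meridian b β - y‖ ^ 2 = ‖y‖ ^ 2 -
      2 * R * (cos β * inner ℝ (b 0) y + sin β * inner ℝ (b 1) y) + R ^ 2 := by
  rw [norm_sub_sq_real, norm_smul, norm_meridian, real_inner_smul_left, inner_meridian,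
    norm_of_nonneg hR]
  ring

variable [FiniteDimensional ℝ E] [MeasurableSpace E] [BorelSpace E]

theorem lintegral_spherical {F : ℝ × ℝ × ℝ → ℝ≥0∞} (hF : Measurable F) :
    ∫⁻ y, F (‖y‖, inner ℝ (b 0) y, inner ℝ (b 1) y) =
      ENNReal.ofReal (2 * π) * ∫⁻ r in Ioi (0 : ℝ), ∫⁻ α in Ioo 0 π, ∫⁻ φ in Ioo 0 π,
        ENNReal.ofReal (r ^ 3 * sin α ^ 2 * sin φ) * F (r, r * cos α, r * sin α * cos φ) := by
  have hb := b.measurePreserving_repr_symm.comp (PiLp.volume_preserving_toLp (Fin 4))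
  rw [← lintegral_norm_coord_coord hF, ← hb.lintegral_comp (by fun_prop),
    lintegral_fin_four (by fun_prop)]
  refine lintegral_congr fun v₀ => lintegral_congr fun v₁ =>
    lintegral_congr fun v₂ => lintegral_congr fun v₃ => ?_
  simp [EuclideanSpace.norm_eq, Fin.sum_univ_four, ← b.repr_apply_apply, add_assoc]

theorem lintegral_Ioo_sin : ∫⁻ φ in Ioo 0 π, ENNReal.ofReal (sin φ) = 2 := by
  rw [lintegral_Ioo_ofReal pi_pos.le continuous_sin fun φ hφ => (sin_pos_of_mem_Ioo hφ).le,
    integral_sin]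
  norm_num

theorem lintegral_of_axial {G : E → ℝ≥0∞} (hG : Measurable G)
    (hsym : ∀ x y, ‖x‖ = ‖y‖ → inner ℝ (b 0) x = inner ℝ (b 0) y → G x = G y) :
    ∫⁻ x, G x = ENNReal.ofReal (4 * π) * ∫⁻ r in Ioi (0 : ℝ), ∫⁻ β in Ioo 0 π,
      ENNReal.ofReal (r ^ 3 * sin β ^ 2) * G (r • meridian b β) := by
  have hx (x : E) :
      G x = G (inner ℝ (b 0) x • b 0 + √(‖x‖ ^ 2 - inner ℝ (b 0) x ^ 2) • b 1) := by
    have hle : inner ℝ (b 0) x ^ 2 ≤ ‖x‖ ^ 2 := sq_le_sq.mpr (by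
      simpa [abs_norm] using abs_real_inner_le_norm (b 0) x)
    refine hsym _ _ ?_ (by simp [inner_add_right, inner_smul_right, b.inner_eq_zero])
    rw [← sq_eq_sq₀ (norm_nonneg _) (norm_nonneg _), norm_smul_add_smul_sq,
      sq_sqrt (sub_nonneg.mpr hle), add_sub_cancel]
  have hfour : ENNReal.ofReal (4 * π) = ENNReal.ofReal (2 * π) * 2 := by
    rw [← ENNReal.ofReal_ofNat 2, ← ENNReal.ofReal_mul (by positivity)]
    ring_nf
  rw [lintegral_congr hx, lintegral_spherical b
    (F := fun p => G (p.2.1 • b 0 + √(p.1 ^ 2 - p.2.1 ^ 2) • b 1)) (by fun_prop), hfour,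
    mul_assoc, ← lintegral_const_mul' _ _ ENNReal.ofNat_ne_top]
  congr 1
  refine setLIntegral_congr_fun measurableSet_Ioi fun r hr => ?_
  rw [← lintegral_const_mul' _ _ ENNReal.ofNat_ne_top]
  refine setLIntegral_congr_fun measurableSet_Ioo fun β hβ => ?_
  have hr : 0 < r := hr
  have hsin := sin_pos_of_mem_Ioo hβ
  have hmer : (r * cos β) • b 0 + √(r ^ 2 - (r * cos β) ^ 2) • b 1 = r • meridian b β := by
    rw [show r ^ 2 - (r * cos β) ^ 2 = (r * sin β) ^ 2 by
      linear_combination -r ^ 2 * cos_sq_add_sin_sq β, sqrt_sq (by positivity), meridian, smul_add,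
      smul_smul, smul_smul]
  simp only [hmer]
  calc ∫⁻ φ in Ioo 0 π, ENNReal.ofReal (r ^ 3 * sin β ^ 2 * sin φ) * G (r • meridian b β)
      = ∫⁻ φ in Ioo 0 π, ENNReal.ofReal (r ^ 3 * sin β ^ 2) * G (r • meridian b β) *
          ENNReal.ofReal (sin φ) := by
        refine lintegral_congr fun φ => ?_
        rw [ENNReal.ofReal_mul (by positivity), mul_right_comm]
    _ = 2 * (ENNReal.ofReal (r ^ 3 * sin β ^ 2) * G (r • meridian b β)) := by
        rw [lintegral_const_mul _ (by fun_prop), lintegral_Ioo_sin, mul_comm]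

end Coordinates

section TermwiseIntegration

variable {ι X : Type*} [Countable ι] [MeasurableSpace X] {μ : Measure X} {f : ι → X → ℝ}

theorem integrable_tsum_of_summable_integral_norm (hf : ∀ i, Integrable (f i) μ)
    (hsum : Summable fun i => ∫ x, ‖f i x‖ ∂μ) : Integrable (fun x => ∑' i, f i x) μ := by
  refine ⟨(AEMeasurable.tsum fun i => (hf i).aemeasurable).aestronglyMeasurable, ?_⟩
  calc ∫⁻ x, ‖∑' i, f i x‖ₑ ∂μ
      ≤ ∫⁻ x, ∑' i, ‖f i x‖ₑ ∂μ := lintegral_mono fun x => enorm_tsum_le_tsum_enorm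
    _ = ∑' i, ENNReal.ofReal (∫ x, ‖f i x‖ ∂μ) := by
        rw [lintegral_tsum fun i => (hf i).1.enorm]
        exact tsum_congr fun i => (ofReal_integral_norm_eq_lintegral_enorm (hf i)).symm
    _ < ∞ := hsum.tsum_ofReal_lt_top

end TermwiseIntegration

section SineSeries

theorem integral_cos_int_mul (k : ℤ) :
    ∫ α in (0 : ℝ)..π, cos (k * α) = if k = 0 then π else 0 := by
  split_ifs with h
  · simp [h]
  · rw [intervalIntegral.integral_comp_mul_left cos (Int.cast_ne_zero.mpr h)]
    simp [sin_int_mul_pi]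

theorem integral_sin_mul_sin (m n : ℕ) :
    ∫ α in (0 : ℝ)..π, sin ((m + 1) * α) * sin ((n + 1) * α) = if m = n then π / 2 else 0 := by
  have h (α : ℝ) : sin ((m + 1) * α) * sin ((n + 1) * α) =
      2⁻¹ * (cos ((m - n : ℤ) * α) - cos ((m + n + 2 : ℤ) * α)) := by
    push_cast
    rw [show ((m : ℝ) - n) * α = (m + 1) * α - (n + 1) * α by ring,
      show ((m : ℝ) + n + 2) * α = (m + 1) * α + (n + 1) * α by ring, cos_sub, cos_add]
    ring
  simp_rw [h]
  rw [intervalIntegral.integral_const_mul, intervalIntegral.integral_sub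
    (Continuous.intervalIntegrable (by fun_prop) _ _)
    (Continuous.intervalIntegrable (by fun_prop) _ _), integral_cos_int_mul, integral_cos_int_mul,
    if_neg (by omega : ¬(m + n + 2 : ℤ) = 0)]
  simp only [sub_eq_zero, Nat.cast_inj, sub_zero, mul_ite, mul_zero]
  split_ifs <;> ring

/-- The sine series `∑ aₙ sin ((n + 1) θ)`: the coefficient `a n` belongs to the frequency
`n + 1`. -/
noncomputable def sineSeries (a : ℕ → ℝ) (θ : ℝ) : ℝ :=
  ∑' n, a n * sin ((n + 1) * θ)

theorem norm_mul_sin_le (x θ : ℝ) : ‖x * sin θ‖ ≤ |x| := by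
  rw [norm_mul]
  exact mul_le_of_le_one_right (abs_nonneg x) (abs_sin_le_one θ)

variable {a b : ℕ → ℝ}

theorem hasSum_sineSeries (ha : Summable fun n => |a n|) (θ : ℝ) :
    HasSum (fun n => a n * sin ((n + 1) * θ)) (sineSeries a θ) :=
  (Summable.of_norm_bounded ha fun _ => norm_mul_sin_le _ _).hasSum

theorem continuous_sineSeries (ha : Summable fun n => |a n|) : Continuous (sineSeries a) :=
  continuous_tsum (fun n => by fun_prop) ha fun _ _ => norm_mul_sin_le _ _

theorem integral_sineSeries_mul (ha : Summable fun n => |a n|) {g : ℝ → ℝ} (hg : Continuous g) :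
    ∫ α in (0 : ℝ)..π, sineSeries a α * g α =
      ∑' n, a n * ∫ α in (0 : ℝ)..π, sin ((n + 1) * α) * g α := by
  obtain ⟨C, hC⟩ := (isCompact_uIcc (a := 0) (b := π)).exists_bound_of_continuousOn hg.continuousOn
  have h := intervalIntegral.hasSum_integral_of_dominated_convergence (μ := volume)
    (a := 0) (b := π) (F := fun n α => a n * (sin ((n + 1) * α) * g α))
    (f := fun α => sineSeries a α * g α) (fun n _ => |a n| * C)
    (fun n => Continuous.aestronglyMeasurable (by fun_prop))
    (fun n => .of_forall fun α hα => ?_)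
    (.of_forall fun _ _ => ha.mul_right C) (by simp)
    (.of_forall fun α _ => by simpa only [mul_assoc] using (hasSum_sineSeries ha α).mul_right (g α))
  · simpa only [intervalIntegral.integral_const_mul] using h.tsum_eq.symm
  · rw [← mul_assoc, norm_mul]
    exact mul_le_mul (norm_mul_sin_le _ _) (hC α (uIoc_subset_uIcc hα)) (norm_nonneg _)
      (abs_nonneg _)

theorem integral_sineSeries_mul_sineSeries (ha : Summable fun n => |a n|)
    (hb : Summable fun n => |b n|) :
    ∫ α in (0 : ℝ)..π, sineSeries a α * sineSeries b α = π / 2 * ∑' n, a n * b n := by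
  have hcoeff (n : ℕ) :
      ∫ α in (0 : ℝ)..π, sin ((n + 1) * α) * sineSeries b α = π / 2 * b n := by
    simp_rw [mul_comm (sin _) (sineSeries b _)]
    rw [integral_sineSeries_mul hb (by fun_prop)]
    simp_rw [integral_sin_mul_sin, mul_ite, mul_zero]
    rw [tsum_ite_eq, mul_comm]
  rw [integral_sineSeries_mul ha (continuous_sineSeries hb), ← tsum_mul_left]
  exact tsum_congr fun n => by rw [hcoeff]; ring

theorem lintegral_sineSeries_sq (ha : Summable fun n => |a n|) :
    ∫⁻ α in Ioo 0 π, ENNReal.ofReal (sineSeries a α ^ 2) =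
      ENNReal.ofReal (π / 2) * ∑' n, ENNReal.ofReal (a n ^ 2) := by
  have ha' : Summable a := summable_abs_iff.mp ha
  have hsq : Summable fun n => a n ^ 2 := by
    simpa only [sq] using ha'.norm.mul_tendsto_const ha'.tendsto_cofinite_zero
  rw [← ENNReal.ofReal_tsum_of_nonneg (fun n => sq_nonneg _) hsq,
    ← ENNReal.ofReal_mul (by positivity), lintegral_Ioo_ofReal (f := fun α => sineSeries a α ^ 2)
      pi_pos.le ((continuous_sineSeries ha).pow 2) fun α _ => sq_nonneg _]
  simp only [sq]
  rw [integral_sineSeries_mul_sineSeries ha ha]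

variable {X : Type*} [MeasurableSpace X] {μ : Measure X} {c : ℕ → X → ℝ}

theorem summable_integral_norm_mul_sin (hc : ∀ n, Integrable (c n) μ)
    (hsum : Summable fun n => ∫ x, |c n x| ∂μ) (θ : ℝ) :
    Summable fun n => ∫ x, ‖c n x * sin ((n + 1) * θ)‖ ∂μ :=
  .of_nonneg_of_le (fun _ => integral_nonneg fun _ => norm_nonneg _)
    (fun n => integral_mono ((hc n).mul_const _).norm (hc n).abs fun _ => norm_mul_sin_le _ _) hsum

theorem integrable_sineSeries (hc : ∀ n, Integrable (c n) μ)
    (hsum : Summable fun n => ∫ x, |c n x| ∂μ) (θ : ℝ) :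
    Integrable (fun x => sineSeries (c · x) θ) μ :=
  integrable_tsum_of_summable_integral_norm (fun n => (hc n).mul_const _)
    (summable_integral_norm_mul_sin hc hsum θ)

theorem integral_sineSeries (hc : ∀ n, Integrable (c n) μ)
    (hsum : Summable fun n => ∫ x, |c n x| ∂μ) (θ : ℝ) :
    ∫ x, sineSeries (c · x) θ ∂μ = sineSeries (fun n => ∫ x, c n x ∂μ) θ := by
  have h := hasSum_integral_of_summable_integral_norm (fun n => (hc n).mul_const _)
    (summable_integral_norm_mul_sin hc hsum θ)
  simpa only [sineSeries, integral_mul_const] using h.tsum_eq.symm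

end SineSeries

section CylinderKernel

/-- The squared distance `‖x - y‖² / (‖x‖ ‖y‖)` in log-polar coordinates, as a function of the
difference `t` of the log-radii of `x` and `y` and of the cosine `c` of the angle between them. -/
noncomputable def cylDist (t c : ℝ) : ℝ :=
  2 * cosh t - 2 * c

@[fun_prop]
theorem continuous_cylDist : Continuous fun p : ℝ × ℝ => cylDist p.1 p.2 := by
  unfold cylDist
  fun_prop

theorem cylDist_pos {t c : ℝ} (ht : t ≠ 0) (hc : c ≤ 1) : 0 < cylDist t c := by
  have := one_lt_cosh.mpr ht
  rw [cylDist]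
  linarith

theorem exp_sq_sub_add_exp_sq (t T c : ℝ) :
    exp t ^ 2 - 2 * exp t * exp T * c + exp T ^ 2 = exp t * exp T * cylDist (t - T) c := by
  rw [cylDist, cosh_eq, neg_sub, exp_sub, exp_sub]
  field_simp
  ring

/-- The point of the complex unit disc with polar coordinates `(e^{-|t|}, θ)`. -/
noncomputable def diskPoint (t θ : ℝ) : ℂ :=
  Complex.exp (-|t| + θ * Complex.I)

theorem re_diskPoint_pow (t θ : ℝ) (n : ℕ) :
    (diskPoint t θ ^ n).re = exp (-(n * |t|)) * cos (n * θ) := by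
  rw [diskPoint, ← Complex.exp_nat_mul, Complex.exp_re]
  simp

theorem im_diskPoint_pow (t θ : ℝ) (n : ℕ) :
    (diskPoint t θ ^ n).im = exp (-(n * |t|)) * sin (n * θ) := by
  rw [diskPoint, ← Complex.exp_nat_mul, Complex.exp_im]
  simp

theorem norm_diskPoint_lt_one {t : ℝ} (ht : t ≠ 0) (θ : ℝ) : ‖diskPoint t θ‖ < 1 := by
  simpa [diskPoint, Complex.norm_exp] using ht

theorem re_diskPoint (t θ : ℝ) : (diskPoint t θ).re = exp (-|t|) * cos θ := by
  simpa using re_diskPoint_pow t θ 1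

theorem im_diskPoint (t θ : ℝ) : (diskPoint t θ).im = exp (-|t|) * sin θ := by
  simpa using im_diskPoint_pow t θ 1

theorem normSq_one_sub_diskPoint (t θ : ℝ) :
    Complex.normSq (1 - diskPoint t θ) = exp (-|t|) * cylDist t (cos θ) := by
  have h := exp_sq_sub_add_exp_sq 0 (-|t|) (cos θ)
  rw [exp_zero, zero_sub, neg_neg, cylDist, cosh_abs, ← cylDist] at h
  simp only [Complex.normSq_apply, Complex.sub_re, Complex.sub_im, Complex.one_re, Complex.one_im,
    re_diskPoint, im_diskPoint]
  linear_combination h + exp (-|t|) ^ 2 * cos_sq_add_sin_sq θ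

theorem sineSeries_exp_neg_mul_abs {t : ℝ} (ht : t ≠ 0) (θ : ℝ) :
    sineSeries (fun n => exp (-((n + 1) * |t|))) θ = sin θ / cylDist t (cos θ) := by
  have h := Complex.hasSum_im ((hasSum_geometric_of_norm_lt_one
    (norm_diskPoint_lt_one ht θ)).mul_left (diskPoint t θ))
  simp only [← pow_succ', im_diskPoint_pow, Nat.cast_add_one] at h
  have hval : (diskPoint t θ * (1 - diskPoint t θ)⁻¹).im = sin θ / cylDist t (cos θ) := by
    have := (cylDist_pos ht (cos_le_one θ)).ne'
    rw [← div_eq_mul_inv, Complex.div_im, normSq_one_sub_diskPoint]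
    simp only [Complex.sub_re, Complex.sub_im, Complex.one_re, Complex.one_im, re_diskPoint,
      im_diskPoint]
    field_simp
    ring
  rw [← hval, ← h.tsum_eq, sineSeries]

theorem hasSum_exp_neg_mul_abs_mul_cos {t : ℝ} (ht : t ≠ 0) (θ : ℝ) :
    HasSum (fun n : ℕ => exp (-((n + 1) * |t|)) / (n + 1) * cos ((n + 1) * θ))
      ((|t| - log (cylDist t (cos θ))) / 2) := by
  have h := Complex.hasSum_re (Complex.hasSum_taylorSeries_neg_log' (norm_diskPoint_lt_one ht θ))
  have hval : (-Complex.log (1 - diskPoint t θ)).re = (|t| - log (cylDist t (cos θ))) / 2 := by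
    have hlog := log_pow ‖1 - diskPoint t θ‖ 2
    rw [← Complex.normSq_eq_norm_sq, normSq_one_sub_diskPoint, log_mul
      (exp_ne_zero _) (cylDist_pos ht (cos_le_one θ)).ne', log_exp] at hlog
    rw [Complex.neg_re, Complex.log_re]
    push_cast at hlog
    linarith
  rw [hval] at h
  convert h using 2 with n
  rw [← Nat.cast_add_one, ← Nat.cast_add_one, Complex.div_natCast_re, re_diskPoint_pow]
  ring

/-- The logarithm of the ratio of the values of `cylDist s` at the two angles `α ± β`. -/
noncomputable def logRatio (s α β : ℝ) : ℝ :=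
  log (cylDist s (cos (α + β)) / cylDist s (cos (α - β)))

theorem logRatio_nonneg {s α β : ℝ} (hs : s ≠ 0) (hα : α ∈ Ioo 0 π) (hβ : β ∈ Ioo 0 π) :
    0 ≤ logRatio s α β := by
  have h := mul_pos (sin_pos_of_mem_Ioo hα) (sin_pos_of_mem_Ioo hβ)
  refine log_nonneg ((one_le_div (cylDist_pos hs (cos_le_one _))).mpr ?_)
  rw [cylDist, cylDist, cos_add, cos_sub]
  linarith

theorem sineSeries_exp_neg_mul_abs_mul_sin {s : ℝ} (hs : s ≠ 0) (α β : ℝ) :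
    sineSeries (fun n => 4 / (n + 1) * exp (-((n + 1) * |s|)) * sin ((n + 1) * β)) α =
      logRatio s α β := by
  have h := ((hasSum_exp_neg_mul_abs_mul_cos hs (α - β)).sub
    (hasSum_exp_neg_mul_abs_mul_cos hs (α + β))).mul_left 2
  have hval : logRatio s α β = 2 * ((|s| - log (cylDist s (cos (α - β)))) / 2 -
      (|s| - log (cylDist s (cos (α + β)))) / 2) := by
    rw [logRatio, log_div (cylDist_pos hs (cos_le_one _)).ne' (cylDist_pos hs (cos_le_one _)).ne']
    ring
  rw [hval, ← h.tsum_eq]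
  refine tsum_congr fun n => ?_
  rw [mul_sub (n + 1 : ℝ), mul_add (n + 1 : ℝ), cos_sub, cos_add]
  ring

end CylinderKernel

section LaplaceKernel

theorem integral_pow_mul_exp_neg_mul_Ioi (k : ℕ) {a : ℝ} (ha : 0 < a) :
    ∫ t in Ioi (0 : ℝ), t ^ k * exp (-(a * t)) = k.factorial / a ^ (k + 1) := by
  have h := integral_rpow_mul_exp_neg_mul_Ioi (a := k + 1) (by positivity) ha
  simp only [add_sub_cancel_right, rpow_natCast] at h
  rw [h, Gamma_nat_eq_factorial, ← Nat.cast_add_one, rpow_natCast, one_div, inv_pow, mul_comm,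
    div_eq_mul_inv]

theorem integrableOn_pow_mul_exp_neg_mul_Ioi (k : ℕ) {a : ℝ} (ha : 0 < a) :
    IntegrableOn (fun t => t ^ k * exp (-(a * t))) (Ioi 0) :=
  .of_integral_ne_zero (by rw [integral_pow_mul_exp_neg_mul_Ioi k ha]; positivity)

variable {N : ℝ}

theorem integral_exp_neg_mul_max_Ioi (hN : 0 < N) {c : ℝ} (hc : 0 ≤ c) :
    ∫ t in Ioi (0 : ℝ), exp (-(N * max c t)) = (1 / N + c) * exp (-(N * c)) := by
  have hIoc : EqOn (fun t => exp (-(N * max c t))) (fun _ => exp (-(N * c))) (Ioc 0 c) :=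
    fun t ht => by simp only [max_eq_left ht.2]
  have hIoi : EqOn (fun t => exp (-(N * max c t))) (fun t => exp (-N * t)) (Ioi c) :=
    fun t ht => by simp only [max_eq_right (show c < t from ht).le, neg_mul]
  rw [← Ioc_union_Ioi_eq_Ioi hc, setIntegral_union (Ioc_disjoint_Ioi le_rfl) measurableSet_Ioi
      ((integrableOn_congr_fun hIoc measurableSet_Ioc).mpr (integrableOn_const (by simp)))
      ((integrableOn_congr_fun hIoi measurableSet_Ioi).mpr
        (integrableOn_exp_mul_Ioi (neg_lt_zero.mpr hN) c)),
    setIntegral_congr_fun measurableSet_Ioc hIoc, setIntegral_congr_fun measurableSet_Ioi hIoi,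
    setIntegral_const, integral_exp_mul_Ioi (neg_lt_zero.mpr hN), measureReal_def, Real.volume_Ioc,
    sub_zero, ENNReal.toReal_ofReal hc, smul_eq_mul, neg_div_neg_eq, neg_mul]
  ring

theorem integral_exp_neg_mul_abs_add_abs_sub (hN : 0 < N) (T : ℝ) :
    ∫ t, exp (-(N * (|t| + |t - T|))) = (1 / N + |T|) * exp (-(N * |T|)) := by
  have hmax (t : ℝ) : |t + T / 2| + |t + T / 2 - T| = 2 * max (|T| / 2) |t| := by
    rcases abs_cases T with hT | hT <;> rcases abs_cases t with ht | ht <;>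
      rcases abs_cases (t + T / 2) with h₁ | h₁ <;>
      rcases abs_cases (t + T / 2 - T) with h₂ | h₂ <;>
      rcases max_cases (|T| / 2) |t| with h₃ | h₃ <;> linarith
  rw [← integral_add_right_eq_self _ (T / 2)]
  simp_rw [hmax]
  rw [integral_comp_abs (f := fun t => exp (-(N * (2 * max (|T| / 2) t))))]
  simp_rw [← mul_assoc]
  rw [integral_exp_neg_mul_max_Ioi (by positivity) (by positivity)]
  field_simp

/-- The product of the Laplace kernels `exp (-(N * |t|))` and `exp (-(N * |s|))`, divided by
`N`. -/
noncomputable def laplaceProd (N t s : ℝ) : ℝ :=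
  1 / N * exp (-(N * (|t| + |s|)))

/-- The convolution square at `T` of the Laplace kernel `exp (-(N * |t|))`, divided by `N`. -/
noncomputable def boxCoeff (N T : ℝ) : ℝ :=
  1 / N * ((1 / N + |T|) * exp (-(N * |T|)))

theorem laplaceProd_nonneg (hN : 0 < N) (t s : ℝ) : 0 ≤ laplaceProd N t s := by
  unfold laplaceProd
  positivity

theorem boxCoeff_pos (hN : 0 < N) (T : ℝ) : 0 < boxCoeff N T := by
  unfold boxCoeff
  positivity

theorem integral_laplaceProd (hN : 0 < N) (T : ℝ) :
    ∫ t, laplaceProd N t (t - T) = boxCoeff N T := by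
  simp only [laplaceProd, boxCoeff]
  rw [integral_const_mul, integral_exp_neg_mul_abs_add_abs_sub hN]

theorem integrable_laplaceProd (hN : 0 < N) (T : ℝ) :
    Integrable fun t => laplaceProd N t (t - T) :=
  .of_integral_ne_zero (by rw [integral_laplaceProd hN]; exact (boxCoeff_pos hN T).ne')

theorem integral_boxCoeff_sq (hN : 0 < N) : ∫ T, boxCoeff N T ^ 2 = 5 / 2 * (1 / N ^ 5) := by
  have hexpand (T : ℝ) : (1 / N * ((1 / N + T) * exp (-(N * T)))) ^ 2 =
      1 / N ^ 4 * (T ^ 0 * exp (-(2 * N * T))) + 2 / N ^ 3 * (T ^ 1 * exp (-(2 * N * T))) +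
        1 / N ^ 2 * (T ^ 2 * exp (-(2 * N * T))) := by
    rw [show exp (-(2 * N * T)) = exp (-(N * T)) ^ 2 by rw [← exp_nat_mul]; push_cast; ring_nf]
    field_simp
    ring
  have hint (k : ℕ) (C : ℝ) :=
    (integrableOn_pow_mul_exp_neg_mul_Ioi k (a := 2 * N) (by positivity)).const_mul C
  simp only [boxCoeff]
  rw [integral_comp_abs (f := fun T => (1 / N * ((1 / N + T) * exp (-(N * T)))) ^ 2)]
  simp_rw [hexpand]
  rw [integral_add (by exact (hint 0 _).add (hint 1 _)) (hint 2 _),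
    integral_add (hint 0 _) (hint 1 _)]
  simp_rw [integral_const_mul]
  simp_rw [integral_pow_mul_exp_neg_mul_Ioi _ (a := 2 * N) (by positivity)]
  norm_num
  field_simp
  norm_num

theorem integrable_boxCoeff_sq (hN : 0 < N) : Integrable fun T => boxCoeff N T ^ 2 :=
  .of_integral_ne_zero (by rw [integral_boxCoeff_sq hN]; positivity)

end LaplaceKernel

section BoxSeries

theorem summable_exp_neg_succ_mul {c : ℝ} (hc : 0 < c) :
    Summable fun n : ℕ => exp (-((n + 1) * c)) := by
  have h := (summable_nat_add_iff 1).mpr (Real.summable_exp_nat_mul_iff.mpr (neg_lt_zero.mpr hc))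
  refine h.congr fun n => ?_
  rw [Nat.cast_add_one, mul_neg]

theorem one_div_natCast_add_one_le_one (n : ℕ) : 1 / (n + 1 : ℝ) ≤ 1 :=
  div_le_one_of_le₀ (by linarith [n.cast_nonneg (α := ℝ)]) (by positivity)

theorem summable_boxCoeff {T : ℝ} (hT : T ≠ 0) : Summable fun n : ℕ => boxCoeff (n + 1) T := by
  refine .of_nonneg_of_le (fun n => (boxCoeff_pos (by positivity) T).le) (fun n => ?_)
    ((summable_exp_neg_succ_mul (abs_pos.mpr hT)).mul_left (1 * (1 + |T|)))
  have := one_div_natCast_add_one_le_one n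
  rw [boxCoeff, ← mul_assoc]
  gcongr

/-- The box function in log-polar coordinates, up to the factor `2 * π ^ 2 / (exp T * sin β)`. -/
noncomputable def boxSeries (T β : ℝ) : ℝ :=
  sineSeries (fun n => boxCoeff (n + 1) T) β

variable {t s : ℝ}

theorem summable_abs_logRatio_coeff (hs : s ≠ 0) (β : ℝ) :
    Summable fun n : ℕ => |4 / (n + 1) * exp (-((n + 1) * |s|)) * sin ((n + 1) * β)| := by
  refine .of_nonneg_of_le (fun n => abs_nonneg _) (fun n => (norm_mul_sin_le _ _).trans ?_)
    ((summable_exp_neg_succ_mul (abs_pos.mpr hs)).mul_left (4 * 1))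
  have := one_div_natCast_add_one_le_one n
  rw [abs_of_nonneg (by positivity), div_eq_mul_one_div]
  gcongr

theorem continuous_sin_div_cylDist (ht : t ≠ 0) :
    Continuous fun α => sin α / cylDist t (cos α) :=
  Continuous.div (by fun_prop) (by fun_prop) fun α => (cylDist_pos ht (cos_le_one α)).ne'

theorem continuous_logRatio (hs : s ≠ 0) (β : ℝ) : Continuous (logRatio s · β) := by
  have hpos (θ : ℝ) := (cylDist_pos hs (cos_le_one θ)).ne'
  unfold logRatio
  exact (Continuous.div (by fun_prop) (by fun_prop) fun α => hpos _).log
    fun α => div_ne_zero (hpos _) (hpos _)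

theorem integral_sin_div_cylDist_mul_logRatio (ht : t ≠ 0) (hs : s ≠ 0) (β : ℝ) :
    ∫ α in (0 : ℝ)..π, sin α / cylDist t (cos α) * logRatio s α β =
      2 * π * sineSeries (fun n => laplaceProd (n + 1) t s) β := by
  simp_rw [← sineSeries_exp_neg_mul_abs ht, ← sineSeries_exp_neg_mul_abs_mul_sin hs]
  rw [integral_sineSeries_mul_sineSeries (summable_exp_neg_succ_mul (abs_pos.mpr ht)).abs
    (summable_abs_logRatio_coeff hs β), sineSeries, ← tsum_mul_left, ← tsum_mul_left]
  refine tsum_congr fun n => ?_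
  rw [laplaceProd, mul_add, neg_add, exp_add]
  ring

theorem sin_div_cylDist_mul_logRatio_nonneg {α β : ℝ} (ht : t ≠ 0) (hs : s ≠ 0)
    (hα : α ∈ Ioo 0 π) (hβ : β ∈ Ioo 0 π) : 0 ≤ sin α / cylDist t (cos α) * logRatio s α β :=
  mul_nonneg (div_nonneg (sin_pos_of_mem_Ioo hα).le (cylDist_pos ht (cos_le_one α)).le)
    (logRatio_nonneg hs hα hβ)

theorem lintegral_sin_div_cylDist_mul_logRatio (ht : t ≠ 0) (hs : s ≠ 0) {β : ℝ}
    (hβ : β ∈ Ioo 0 π) :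
    ∫⁻ α in Ioo 0 π, ENNReal.ofReal (sin α / cylDist t (cos α) * logRatio s α β) =
      ENNReal.ofReal
        (2 * π * sineSeries (fun n => laplaceProd (n + 1) t s) β) := by
  rw [← integral_sin_div_cylDist_mul_logRatio ht hs]
  exact lintegral_Ioo_ofReal pi_pos.le
    ((continuous_sin_div_cylDist ht).mul (continuous_logRatio hs β))
    fun α hα => sin_div_cylDist_mul_logRatio_nonneg ht hs hα hβ

theorem sineSeries_laplaceProd_nonneg (ht : t ≠ 0) (hs : s ≠ 0) {β : ℝ}
    (hβ : β ∈ Ioo 0 π) :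
    0 ≤ sineSeries (fun n => laplaceProd (n + 1) t s) β := by
  refine nonneg_of_mul_nonneg_right ?_ two_pi_pos
  rw [← integral_sin_div_cylDist_mul_logRatio ht hs,
    intervalIntegral.integral_of_le pi_pos.le, integral_Ioc_eq_integral_Ioo]
  exact setIntegral_nonneg measurableSet_Ioo
    fun α hα => sin_div_cylDist_mul_logRatio_nonneg ht hs hα hβ

variable {T β : ℝ}

theorem ae_ne_zero_and_sub_ne_zero (T : ℝ) : ∀ᵐ t : ℝ, t ≠ 0 ∧ t - T ≠ 0 := by
  filter_upwards [Measure.ae_ne volume 0, Measure.ae_ne volume T] with t ht htT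
  exact ⟨ht, sub_ne_zero.mpr htT⟩

theorem summable_integral_abs_laplaceProd (hT : T ≠ 0) :
    Summable fun n : ℕ => ∫ t, |laplaceProd (n + 1) t (t - T)| := by
  refine (summable_boxCoeff hT).congr fun n => ?_
  have hN : (0 : ℝ) < n + 1 := by positivity
  simp_rw [abs_of_nonneg (laplaceProd_nonneg hN _ _), integral_laplaceProd hN]

theorem integrable_sineSeries_laplaceProd (hT : T ≠ 0) (β : ℝ) :
    Integrable fun t => sineSeries (fun n => laplaceProd (n + 1) t (t - T)) β :=
  integrable_sineSeries (fun n => integrable_laplaceProd (by positivity) T)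
    (summable_integral_abs_laplaceProd hT) β

theorem integral_sineSeries_laplaceProd (hT : T ≠ 0) (β : ℝ) :
    ∫ t, sineSeries (fun n => laplaceProd (n + 1) t (t - T)) β = boxSeries T β := by
  rw [integral_sineSeries (fun n => integrable_laplaceProd (by positivity) T)
    (summable_integral_abs_laplaceProd hT), boxSeries]
  congr 1 with n
  exact integral_laplaceProd (by positivity) T

theorem sineSeries_laplaceProd_nonneg_ae (hβ : β ∈ Ioo 0 π) :
    0 ≤ᵐ[volume] fun t => sineSeries (fun n => laplaceProd (n + 1) t (t - T)) β := by
  filter_upwards [ae_ne_zero_and_sub_ne_zero T] with t ht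
  exact sineSeries_laplaceProd_nonneg ht.1 ht.2 hβ

theorem boxSeries_nonneg (hT : T ≠ 0) (hβ : β ∈ Ioo 0 π) : 0 ≤ boxSeries T β := by
  rw [← integral_sineSeries_laplaceProd hT]
  exact integral_nonneg_of_ae (sineSeries_laplaceProd_nonneg_ae hβ)

theorem lintegral_lintegral_sin_div_cylDist_mul_logRatio (hT : T ≠ 0) (hβ : β ∈ Ioo 0 π) :
    ∫⁻ t, ∫⁻ α in Ioo 0 π, ENNReal.ofReal (sin α / cylDist t (cos α) * logRatio (t - T) α β) =
      ENNReal.ofReal (2 * π * boxSeries T β) := by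
  rw [← integral_sineSeries_laplaceProd hT, ENNReal.ofReal_mul two_pi_pos.le,
    ofReal_integral_eq_lintegral_ofReal (integrable_sineSeries_laplaceProd hT β)
      (sineSeries_laplaceProd_nonneg_ae hβ), ← lintegral_const_mul' _ _ ENNReal.ofReal_ne_top]
  refine lintegral_congr_ae ?_
  filter_upwards [ae_ne_zero_and_sub_ne_zero T] with t ht
  rw [lintegral_sin_div_cylDist_mul_logRatio ht.1 ht.2 hβ, ENNReal.ofReal_mul two_pi_pos.le]

theorem lintegral_lintegral_boxSeries_sq :
    ∫⁻ T, ∫⁻ β in Ioo 0 π, ENNReal.ofReal (boxSeries T β ^ 2) =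
      ENNReal.ofReal (5 * π / 4) * ∑' n : ℕ, ENNReal.ofReal (1 / (n + 1) ^ 5) := by
  have hmode (n : ℕ) : ∫⁻ T, ENNReal.ofReal (boxCoeff (n + 1) T ^ 2) =
      ENNReal.ofReal (5 / 2) * ENNReal.ofReal (1 / (n + 1) ^ 5) := by
    have hN : (0 : ℝ) < n + 1 := by positivity
    rw [← ENNReal.ofReal_mul (by norm_num), ← integral_boxCoeff_sq hN,
      ofReal_integral_eq_lintegral_ofReal (integrable_boxCoeff_sq hN)
        (.of_forall fun T => sq_nonneg _)]
  have hae : (fun T => ∫⁻ β in Ioo 0 π, ENNReal.ofReal (boxSeries T β ^ 2)) =ᵐ[volume]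
      fun T => ENNReal.ofReal (π / 2) * ∑' n : ℕ, ENNReal.ofReal (boxCoeff (n + 1) T ^ 2) := by
    filter_upwards [Measure.ae_ne volume 0] with T hT using
      lintegral_sineSeries_sq (summable_boxCoeff hT).abs
  rw [lintegral_congr_ae hae, lintegral_const_mul' _ _ ENNReal.ofReal_ne_top,
    lintegral_tsum fun n => by unfold boxCoeff; fun_prop]
  simp_rw [hmode]
  rw [ENNReal.tsum_mul_left, ← mul_assoc, ← ENNReal.ofReal_mul (by positivity)]
  ring_nf

end BoxSeries

section AzimuthalIntegral

theorem integral_sin_div_sub_mul_cos {A B : ℝ} (hB : 0 < B) (hA : B < A) :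
    ∫ φ in (0 : ℝ)..π, sin φ / (A - B * cos φ) = 1 / B * log ((A + B) / (A - B)) := by
  have hpos (φ : ℝ) : 0 < A - B * cos φ := by nlinarith [cos_le_one φ]
  have hderiv (φ : ℝ) : HasDerivAt (fun φ => 1 / B * log (A - B * cos φ))
      (sin φ / (A - B * cos φ)) φ := by
    refine ((((hasDerivAt_cos φ).const_mul B).const_sub A).log (hpos φ).ne').const_mul (1 / B)
      |>.congr_deriv ?_
    rw [mul_neg, neg_neg, mul_div_assoc, ← mul_assoc, one_div_mul_cancel hB.ne', one_mul]
  have hcont : Continuous fun φ => sin φ / (A - B * cos φ) :=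
    Continuous.div (by fun_prop) (by fun_prop) fun φ => (hpos φ).ne'
  rw [intervalIntegral.integral_eq_sub_of_hasDerivAt (fun φ _ => hderiv φ)
    (hcont.intervalIntegrable _ _), log_div (by linarith) (by linarith), cos_pi, cos_zero]
  ring_nf

variable {α β : ℝ}

theorem cos_mul_cos_add_sin_mul_sin_mul_cos_le_one (hα : α ∈ Ioo 0 π) (hβ : β ∈ Ioo 0 π) (φ : ℝ) :
    cos α * cos β + sin α * sin β * cos φ ≤ 1 := by
  have h := mul_pos (sin_pos_of_mem_Ioo hα) (sin_pos_of_mem_Ioo hβ)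
  calc cos α * cos β + sin α * sin β * cos φ ≤ cos (α - β) := by
        rw [cos_sub]
        linarith [mul_le_of_le_one_right h.le (cos_le_one φ)]
    _ ≤ 1 := cos_le_one _

theorem lintegral_sin_div_cylDist {s : ℝ} (hs : s ≠ 0) (hα : α ∈ Ioo 0 π) (hβ : β ∈ Ioo 0 π) :
    ∫⁻ φ in Ioo 0 π, ENNReal.ofReal
        (sin φ / cylDist s (cos α * cos β + sin α * sin β * cos φ)) =
      ENNReal.ofReal (1 / (2 * sin α * sin β) * logRatio s α β) := by
  have hsinα := sin_pos_of_mem_Ioo hα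
  have hsinβ := sin_pos_of_mem_Ioo hβ
  have hpos (φ : ℝ) := cylDist_pos hs (cos_mul_cos_add_sin_mul_sin_mul_cos_le_one hα hβ φ)
  have hcont : Continuous fun φ => sin φ / cylDist s (cos α * cos β + sin α * sin β * cos φ) :=
    Continuous.div (by fun_prop) (by fun_prop) fun φ => (hpos φ).ne'
  rw [lintegral_Ioo_ofReal pi_pos.le hcont
    fun φ hφ => div_nonneg (sin_pos_of_mem_Ioo hφ).le (hpos φ).le]
  have hdist (φ : ℝ) : cylDist s (cos α * cos β + sin α * sin β * cos φ) =
      (2 * cosh s - 2 * cos α * cos β) - 2 * sin α * sin β * cos φ := by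
    rw [cylDist]
    ring
  have hlt : 2 * sin α * sin β < 2 * cosh s - 2 * cos α * cos β := by
    have h := hpos 0
    rw [hdist, cos_zero] at h
    linarith
  simp_rw [hdist]
  rw [integral_sin_div_sub_mul_cos (by positivity) hlt, logRatio, cylDist, cylDist, cos_add,
    cos_sub]
  ring_nf

end AzimuthalIntegral

section BoxFunction

variable {E : Type*} [NormedAddCommGroup E] [InnerProductSpace ℝ E] [FiniteDimensional ℝ E]
  [MeasurableSpace E] [BorelSpace E]

/-- The one-loop box integral with external points `0`, `e`, `x` and `∞`. -/
noncomputable def boxFunction (e x : E) : ℝ≥0∞ :=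
  ∫⁻ y, ENNReal.ofReal (1 / (‖y‖ ^ 2 * ‖e - y‖ ^ 2 * ‖x - y‖ ^ 2))

@[fun_prop]
theorem measurable_boxFunction (e : E) : Measurable (boxFunction e) :=
  Measurable.lintegral_prod_right' (ν := volume)
    (f := fun z : E × E => ENNReal.ofReal (1 / (‖z.2‖ ^ 2 * ‖e - z.2‖ ^ 2 * ‖z.1 - z.2‖ ^ 2)))
    (by fun_prop)

theorem boxFunction_map (f : E ≃ₗᵢ[ℝ] E) (e x : E) :
    boxFunction (f e) (f x) = boxFunction e x := by
  rw [boxFunction, ← f.measurePreserving.lintegral_comp (by fun_prop), boxFunction]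
  simp_rw [← map_sub, f.norm_map]

theorem boxFunction_eq_of_norm_eq {e x y : E} (hnorm : ‖x‖ = ‖y‖)
    (hinner : inner ℝ e x = inner ℝ e y) : boxFunction e x = boxFunction e y := by
  have he : (ℝ ∙ (x - y))ᗮ.reflection e = e :=
    Submodule.reflection_mem_subspace_eq_self
      (Submodule.mem_orthogonal_singleton_iff_inner_left.mpr
        (by rw [inner_sub_right, hinner, sub_self]))
  rw [← boxFunction_map (ℝ ∙ (x - y))ᗮ.reflection, he, Submodule.reflection_sub hnorm]

variable (b : OrthonormalBasis (Fin 4) ℝ E)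

theorem box_integrand_log_polar (t T α β φ : ℝ) :
    exp t * (exp t ^ 3 * sin α ^ 2 * sin φ * (1 / (exp t ^ 2 *
      (exp t ^ 2 - 2 * (exp t * cos α) + 1) * (exp t ^ 2 - 2 * exp T *
        (cos β * (exp t * cos α) + sin β * (exp t * sin α * cos φ)) + exp T ^ 2)))) =
    (exp T)⁻¹ * (sin α ^ 2 * sin φ / (cylDist t (cos α) *
      cylDist (t - T) (cos α * cos β + sin α * sin β * cos φ))) := by
  have hpole := exp_sq_sub_add_exp_sq t 0 (cos α)
  have hmer := exp_sq_sub_add_exp_sq t T (cos α * cos β + sin α * sin β * cos φ)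
  rw [exp_zero, sub_zero] at hpole
  rw [show exp t ^ 2 - 2 * (exp t * cos α) + 1 = exp t * cylDist t (cos α) by
      linear_combination hpole,
    show exp t ^ 2 - 2 * exp T * (cos β * (exp t * cos α) + sin β * (exp t * sin α * cos φ)) +
        exp T ^ 2 = exp t * exp T *
          cylDist (t - T) (cos α * cos β + sin α * sin β * cos φ) by linear_combination hmer]
  field_simp

theorem boxFunction_exp_smul_meridian_eq_lintegral (T β : ℝ) :
    boxFunction (b 0) (exp T • meridian b β) = ENNReal.ofReal (2 * π / exp T) *
      ∫⁻ t, ∫⁻ α in Ioo 0 π, ∫⁻ φ in Ioo 0 π, ENNReal.ofReal (sin α ^ 2 * sin φ /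
        (cylDist t (cos α) * cylDist (t - T) (cos α * cos β + sin α * sin β * cos φ))) := by
  simp only [boxFunction, norm_apply_zero_sub_sq, norm_smul_meridian_sub_sq b (exp_nonneg T)]
  rw [lintegral_spherical b (F := fun p => ENNReal.ofReal (1 / (p.1 ^ 2 *
    (p.1 ^ 2 - 2 * p.2.1 + 1) * (p.1 ^ 2 - 2 * exp T * (cos β * p.2.1 + sin β * p.2.2) +
      exp T ^ 2)))) (by fun_prop), lintegral_exp_subst, div_eq_mul_inv,
    ENNReal.ofReal_mul two_pi_pos.le, mul_assoc]
  congr 1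
  rw [← lintegral_const_mul' _ _ ENNReal.ofReal_ne_top]
  refine lintegral_congr fun t => ?_
  rw [← lintegral_const_mul' _ _ ENNReal.ofReal_ne_top,
    ← lintegral_const_mul' _ _ ENNReal.ofReal_ne_top]
  refine lintegral_congr fun α => ?_
  rw [← lintegral_const_mul' _ _ ENNReal.ofReal_ne_top,
    ← lintegral_const_mul' _ _ ENNReal.ofReal_ne_top]
  refine setLIntegral_congr_fun measurableSet_Ioo fun φ hφ => ?_
  have hsin := sin_pos_of_mem_Ioo hφ
  dsimp only
  rw [← ENNReal.ofReal_mul (by positivity), ← ENNReal.ofReal_mul (by positivity),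
    ← ENNReal.ofReal_mul (by positivity), box_integrand_log_polar]

theorem lintegral_sin_div_cylDist_mul_cylDist {t s α β : ℝ} (ht : t ≠ 0) (hs : s ≠ 0)
    (hα : α ∈ Ioo 0 π) (hβ : β ∈ Ioo 0 π) :
    ∫⁻ φ in Ioo 0 π, ENNReal.ofReal (sin α ^ 2 * sin φ /
        (cylDist t (cos α) * cylDist s (cos α * cos β + sin α * sin β * cos φ))) =
      ENNReal.ofReal (1 / (2 * sin β)) *
        ENNReal.ofReal (sin α / cylDist t (cos α) * logRatio s α β) := by
  have hsinα := sin_pos_of_mem_Ioo hα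
  have hsinβ := sin_pos_of_mem_Ioo hβ
  have hdist := cylDist_pos ht (cos_le_one α)
  simp_rw [mul_div_mul_comm, ENNReal.ofReal_mul (div_nonneg (sq_nonneg (sin α)) hdist.le)]
  rw [lintegral_const_mul' _ _ ENNReal.ofReal_ne_top, lintegral_sin_div_cylDist hs hα hβ,
    ← ENNReal.ofReal_mul (by positivity), ← ENNReal.ofReal_mul (by positivity)]
  congr 1
  field_simp

theorem boxFunction_exp_smul_meridian {T β : ℝ} (hT : T ≠ 0) (hβ : β ∈ Ioo 0 π) :
    boxFunction (b 0) (exp T • meridian b β) =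
      ENNReal.ofReal (2 * π ^ 2 / (exp T * sin β) * boxSeries T β) := by
  have hsinβ := sin_pos_of_mem_Ioo hβ
  have hazimuth : (fun t => ∫⁻ α in Ioo 0 π, ∫⁻ φ in Ioo 0 π, ENNReal.ofReal (sin α ^ 2 * sin φ /
        (cylDist t (cos α) * cylDist (t - T) (cos α * cos β + sin α * sin β * cos φ))))
      =ᵐ[volume] fun t => ENNReal.ofReal (1 / (2 * sin β)) * ∫⁻ α in Ioo 0 π,
        ENNReal.ofReal (sin α / cylDist t (cos α) * logRatio (t - T) α β) := by
    filter_upwards [ae_ne_zero_and_sub_ne_zero T] with t ht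
    rw [← lintegral_const_mul' _ _ ENNReal.ofReal_ne_top]
    exact setLIntegral_congr_fun measurableSet_Ioo fun α hα =>
      lintegral_sin_div_cylDist_mul_cylDist ht.1 ht.2 hα hβ
  rw [boxFunction_exp_smul_meridian_eq_lintegral, lintegral_congr_ae hazimuth,
    lintegral_const_mul' _ _ ENNReal.ofReal_ne_top,
    lintegral_lintegral_sin_div_cylDist_mul_logRatio hT hβ, ← ENNReal.ofReal_mul (by positivity),
    ← ENNReal.ofReal_mul (by positivity)]
  congr 1
  field_simp

theorem sphericalDensity_mul_boxFunction_exp_smul_meridian_sq {T β : ℝ} (hT : T ≠ 0)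
    (hβ : β ∈ Ioo 0 π) :
    ENNReal.ofReal (exp T) * (ENNReal.ofReal (exp T ^ 3 * sin β ^ 2) *
        (ENNReal.ofReal (1 / ‖exp T • meridian b β‖ ^ 2) *
          boxFunction (b 0) (exp T • meridian b β) ^ 2)) =
      ENNReal.ofReal (4 * π ^ 4) * ENNReal.ofReal (boxSeries T β ^ 2) := by
  have hsin := sin_pos_of_mem_Ioo hβ
  have hS := boxSeries_nonneg hT hβ
  rw [norm_smul, norm_meridian, norm_of_nonneg (exp_nonneg T), mul_one,
    boxFunction_exp_smul_meridian b hT hβ, ← ENNReal.ofReal_pow (by positivity),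
    ← ENNReal.ofReal_mul (by positivity), ← ENNReal.ofReal_mul (by positivity),
    ← ENNReal.ofReal_mul (by positivity), ← ENNReal.ofReal_mul (by positivity)]
  congr 1
  field_simp
  ring

theorem lintegral_boxFunction_sq :
    ∫⁻ x, ENNReal.ofReal (1 / ‖x‖ ^ 2) * boxFunction (b 0) x ^ 2 =
      ENNReal.ofReal (20 * π ^ 6) * ∑' n : ℕ, ENNReal.ofReal (1 / (n + 1) ^ 5) := by
  have hradial : (fun T => ENNReal.ofReal (exp T) * ∫⁻ β in Ioo 0 π,
        ENNReal.ofReal (exp T ^ 3 * sin β ^ 2) *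
          (ENNReal.ofReal (1 / ‖exp T • meridian b β‖ ^ 2) *
            boxFunction (b 0) (exp T • meridian b β) ^ 2)) =ᵐ[volume]
      fun T => ENNReal.ofReal (4 * π ^ 4) *
        ∫⁻ β in Ioo 0 π, ENNReal.ofReal (boxSeries T β ^ 2) := by
    filter_upwards [Measure.ae_ne volume 0] with T hT
    rw [← lintegral_const_mul' _ _ ENNReal.ofReal_ne_top,
      ← lintegral_const_mul' _ _ ENNReal.ofReal_ne_top]
    exact setLIntegral_congr_fun measurableSet_Ioo fun β hβ =>
      sphericalDensity_mul_boxFunction_exp_smul_meridian_sq b hT hβ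
  rw [lintegral_of_axial b (by fun_prop) fun x y hnorm hinner => by
      rw [hnorm, boxFunction_eq_of_norm_eq hnorm hinner], lintegral_exp_subst,
    lintegral_congr_ae hradial, lintegral_const_mul' _ _ ENNReal.ofReal_ne_top,
    lintegral_lintegral_boxSeries_sq, ← mul_assoc, ← mul_assoc,
    ← ENNReal.ofReal_mul (by positivity), ← ENNReal.ofReal_mul (by positivity)]
  ring_nf

end BoxFunction

section Wheel

variable {E : Type*} [NormedAddCommGroup E]

/-- The integrand of the wheel with four spokes and hub `0`, at rim vertices `e` and
`x = (x₂, x₃, x₄)` in cyclic order. -/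
noncomputable def wheelIntegrand (e : E) (x : E × E × E) : ℝ :=
  1 / (‖x.1‖ ^ 2 * ‖x.2.1‖ ^ 2 * ‖x.2.2‖ ^ 2 * ‖e - x.1‖ ^ 2 * ‖x.1 - x.2.1‖ ^ 2 *
    ‖x.2.1 - x.2.2‖ ^ 2 * ‖x.2.2 - e‖ ^ 2)

theorem wheelIntegrand_nonneg (e : E) (x : E × E × E) : 0 ≤ wheelIntegrand e x := by
  unfold wheelIntegrand
  positivity

theorem wheelIntegrand_eq_mul (e y x z : E) :
    wheelIntegrand e (y, x, z) = 1 / (‖y‖ ^ 2 * ‖e - y‖ ^ 2 * ‖x - y‖ ^ 2) *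
      (1 / ‖x‖ ^ 2 * (1 / (‖z‖ ^ 2 * ‖e - z‖ ^ 2 * ‖x - z‖ ^ 2))) := by
  simp only [wheelIntegrand, norm_sub_rev y x, norm_sub_rev z e, one_div_mul_one_div]
  congr 1
  ring

variable [InnerProductSpace ℝ E] [FiniteDimensional ℝ E] [MeasurableSpace E] [BorelSpace E]

@[fun_prop]
theorem measurable_wheelIntegrand (e : E) : Measurable (wheelIntegrand e) := by
  unfold wheelIntegrand
  fun_prop

theorem lintegral_wheelIntegrand (e : E) :
    ∫⁻ x, ENNReal.ofReal (wheelIntegrand e x) =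
      ∫⁻ x, ENNReal.ofReal (1 / ‖x‖ ^ 2) * boxFunction e x ^ 2 := by
  have hinner (y : E) : ∫⁻ p : E × E, ENNReal.ofReal (wheelIntegrand e (y, p)) =
      ∫⁻ x, ENNReal.ofReal (1 / (‖y‖ ^ 2 * ‖e - y‖ ^ 2 * ‖x - y‖ ^ 2)) *
        (ENNReal.ofReal (1 / ‖x‖ ^ 2) * boxFunction e x) := by
    rw [Measure.volume_eq_prod, lintegral_prod _ (by fun_prop)]
    refine lintegral_congr fun x => ?_
    rw [boxFunction, ← lintegral_const_mul' _ _ ENNReal.ofReal_ne_top,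
      ← lintegral_const_mul' _ _ ENNReal.ofReal_ne_top]
    refine lintegral_congr fun z => ?_
    rw [wheelIntegrand_eq_mul, ENNReal.ofReal_mul (by positivity),
      ENNReal.ofReal_mul (by positivity)]
  rw [Measure.volume_eq_prod, lintegral_prod _ (by fun_prop)]
  simp_rw [hinner]
  rw [lintegral_lintegral_swap (by fun_prop)]
  refine lintegral_congr fun x => ?_
  rw [lintegral_mul_const _ (by fun_prop), ← boxFunction]
  ring

theorem integrable_and_integral_eq_of_lintegral_ofReal {X : Type*} [MeasurableSpace X]
    {μ : Measure X} {f : X → ℝ} (hf : AEStronglyMeasurable f μ) (hf₀ : 0 ≤ᵐ[μ] f) {c : ℝ}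
    (hc : 0 ≤ c) (h : ∫⁻ x, ENNReal.ofReal (f x) ∂μ = ENNReal.ofReal c) :
    Integrable f μ ∧ ∫ x, f x ∂μ = c := by
  refine ⟨⟨hf, ?_⟩, ?_⟩
  · rw [hasFiniteIntegral_iff_ofReal hf₀, h]
    exact ENNReal.ofReal_lt_top
  · rw [integral_eq_lintegral_of_nonneg_ae hf₀ hf, h, ENNReal.toReal_ofReal hc]

theorem summable_one_div_natCast_add_one_pow {k : ℕ} (hk : 1 < k) :
    Summable fun n : ℕ => 1 / (n + 1 : ℝ) ^ k := by
  simpa using (summable_nat_add_iff 1).mpr (Real.summable_one_div_nat_pow.mpr hk)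

theorem ofReal_tsum_one_div_natCast_add_one_pow {k : ℕ} (hk : 1 < k) :
    ((∑' n : ℕ, 1 / (n + 1 : ℝ) ^ k : ℝ) : ℂ) = riemannZeta k := by
  have h := (Real.summable_one_div_nat_pow.mpr hk).tsum_eq_zero_add
  have hzero : 1 / ((0 : ℕ) : ℝ) ^ k = 0 := by simp [zero_pow (by omega : k ≠ 0)]
  simp only [hzero, zero_add, Nat.cast_add_one] at h
  rw [zeta_nat_eq_tsum_of_gt_one hk, ← h]
  push_cast
  rfl

theorem integrable_wheelIntegrand_and_integral_eq (hE : Module.finrank ℝ E = 4) {e : E}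
    (he : ‖e‖ = 1) : Integrable (wheelIntegrand e) ∧
      ∫ x, wheelIntegrand e x = 20 * π ^ 6 * ∑' n : ℕ, 1 / (n + 1 : ℝ) ^ 5 := by
  obtain ⟨b, rfl⟩ := exists_orthonormalBasis_apply_zero hE he
  refine integrable_and_integral_eq_of_lintegral_ofReal (by fun_prop)
    (.of_forall (wheelIntegrand_nonneg _)) (by positivity) ?_
  rw [lintegral_wheelIntegrand, lintegral_boxFunction_sq, ← ENNReal.ofReal_tsum_of_nonneg
    (fun n => by positivity) (summable_one_div_natCast_add_one_pow (by norm_num)),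
    ← ENNReal.ofReal_mul (by positivity)]

theorem period_wheel_four_spokes_general (hE : Module.finrank ℝ E = 4) (e : E) (he : ‖e‖ = 1) :
    Integrable (wheelIntegrand e) ∧
      ((1 / π ^ 6 * ∫ x, wheelIntegrand e x : ℝ) : ℂ) = 20 * riemannZeta 5 := by
  obtain ⟨hint, hval⟩ := integrable_wheelIntegrand_and_integral_eq hE he
  have hzeta := ofReal_tsum_one_div_natCast_add_one_pow (k := 5) (by norm_num)
  refine ⟨hint, ?_⟩
  rw [hval, ← mul_assoc, show 1 / π ^ 6 * (20 * π ^ 6) = 20 by field_simp, Complex.ofReal_mul,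
    hzeta, Complex.ofReal_ofNat, Nat.cast_ofNat]

end Wheel

/-- The Feynman period of the wheel with four spokes in four dimensions:
the hub at `0`, one rim vertex at the unit vector `e`, the remaining three rim
vertices `x₂, x₃, x₄` integrated, equals `20ζ(5)`. -/
theorem period_wheel_four_spokes
    (e : EuclideanSpace ℝ (Fin 4)) (he : ‖e‖ = 1) :
    Integrable (fun x : EuclideanSpace ℝ (Fin 4) × EuclideanSpace ℝ (Fin 4) ×
        EuclideanSpace ℝ (Fin 4) =>
      1 / (‖x.1‖ ^ 2 * ‖x.2.1‖ ^ 2 * ‖x.2.2‖ ^ 2 * ‖e - x.1‖ ^ 2 *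
        ‖x.1 - x.2.1‖ ^ 2 * ‖x.2.1 - x.2.2‖ ^ 2 * ‖x.2.2 - e‖ ^ 2)) ∧
    (((1 / Real.pi ^ 6) * ∫ x : EuclideanSpace ℝ (Fin 4) × EuclideanSpace ℝ (Fin 4) ×
        EuclideanSpace ℝ (Fin 4),
        1 / (‖x.1‖ ^ 2 * ‖x.2.1‖ ^ 2 * ‖x.2.2‖ ^ 2 * ‖e - x.1‖ ^ 2 *
          ‖x.1 - x.2.1‖ ^ 2 * ‖x.2.1 - x.2.2‖ ^ 2 * ‖x.2.2 - e‖ ^ 2) : ℝ) : ℂ)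
      = 20 * riemannZeta 5 :=
  period_wheel_four_spokes_general (by simp) e he
end

section
/- Let D ≥ 1 be an integer and f : ℝ × ℝ → ℂ such that for every unit vector u ∈ ℝ^D the function g_u(w) = f(‖w‖², ‖w − u‖²) is continuous and Lebesgue integrable on ℝ^D, and its Fourier transform ĝ_u(k) = ∫_{ℝ^D} e^{−i⟨w,k⟩} g_u(w) dw is Lebesgue integrable. Define A(z₁, z₂) = ‖z₁‖^{−D}·f(‖z₂‖²/‖z₁‖², ‖z₂ − z₁‖²/‖z₁‖²) for z₁ ≠ 0. Then for all p₁, p₂ ∈ ℝ^D with p₁ ≠ 0, the function z₁ ↦ e^{i⟨z₁,p₂⟩}·∫_{ℝ^D} e^{−i⟨z₂,p₁⟩} A(z₁, z₂) dz₂ is Lebesgue integrable on ℝ^D and (2π)^{−D} ∫_{ℝ^D} e^{i⟨z₁,p₂⟩} ( ∫_{ℝ^D} e^{−i⟨z₂,p₁⟩} A(z₁, z₂) dz₂ ) dz₁ = A(p₁, p₂). -/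
open MeasureTheory RealInnerProductSpace

/-! By homogeneity, the transform of `A z₁` at `p₁` is the transform of the profile `g_u`,
`u = z₁ / ‖z₁‖`, at `‖z₁‖ • p₁`. The reflection exchanging `u` with `e = p₁ / ‖p₁‖` turns this into
the transform of `g_e` at `‖p₁‖ • z₁`, so that `p₁` and `z₁` have traded roles and the integral over
`z₁` is the Fourier inversion formula for `g_e`. -/

section AngularFourier

open Complex Module FourierTransform

variable {V W E : Type*} [NormedAddCommGroup V] [InnerProductSpace ℝ V] [MeasurableSpace V]
  [BorelSpace V] [FiniteDimensional ℝ V] [NormedAddCommGroup W] [InnerProductSpace ℝ W]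
  [MeasurableSpace W] [BorelSpace W] [FiniteDimensional ℝ W] [NormedAddCommGroup E]
  [NormedSpace ℂ E]

/-- The Fourier transform in the angular-frequency convention: kernel `e^{-i⟨w, k⟩}`, with no factor
`2π` in the exponent and no normalization in front of the integral. -/
noncomputable def angularFourier (g : V → E) (k : V) : E :=
  ∫ w, exp (-I * ((⟪w, k⟫ : ℝ) : ℂ)) • g w

/-- The inverse Fourier transform in the angular-frequency convention, which carries the whole
normalization `(2π)^{-dim V}`. -/
noncomputable def angularFourierInv (h : V → E) (x : V) : E :=
  ((2 * Real.pi) ^ finrank ℝ V)⁻¹ • ∫ k, exp (I * ((⟪k, x⟫ : ℝ) : ℂ)) • h k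

theorem angularFourierInv_eq_angularFourier_neg (h : V → E) (x : V) :
    angularFourierInv h x = ((2 * Real.pi) ^ finrank ℝ V)⁻¹ • angularFourier h (-x) := by
  simp only [angularFourierInv, angularFourier, inner_neg_right, ofReal_neg, neg_mul_neg]

theorem fourier_eq_angularFourier (g : V → E) (k : V) :
    𝓕 g k = angularFourier g ((2 * Real.pi) • k) := by
  rw [Real.fourier_eq', angularFourier]
  congr! 3 with w
  rw [real_inner_smul_right]
  push_cast
  ring_nf

theorem angularFourier_comp_linearIsometryEquiv (R : V ≃ₗᵢ[ℝ] W) (g : W → E) (k : V) :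
    angularFourier (g ∘ R) k = angularFourier g (R k) := by
  have h := Real.fourier_comp_linearIsometry R g ((2 * Real.pi)⁻¹ • k)
  rwa [fourier_eq_angularFourier, fourier_eq_angularFourier, map_smul,
    smul_inv_smul₀ Real.two_pi_pos.ne', smul_inv_smul₀ Real.two_pi_pos.ne'] at h

theorem angularFourier_const_smul (c : ℝ) (g : V → E) (k : V) :
    angularFourier (fun w => c • g w) k = c • angularFourier g k := by
  simp only [angularFourier, smul_comm _ c, integral_smul]

theorem angularFourier_comp_smul {c : ℝ} (hc : c ≠ 0) (g : V → E) (k : V) :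
    angularFourier (fun w => g (c • w)) k =
      (|c| ^ finrank ℝ V)⁻¹ • angularFourier g (c⁻¹ • k) := by
  have hinner (w : V) : ⟪w, k⟫ = ⟪c • w, c⁻¹ • k⟫ := by
    rw [real_inner_smul_left, real_inner_smul_right, mul_inv_cancel_left₀ hc]
  simp only [angularFourier, hinner, ← abs_pow, ← abs_inv]
  exact Measure.integral_comp_smul volume
    (fun w => exp (-I * ((⟪w, c⁻¹ • k⟫ : ℝ) : ℂ)) • g w) c

theorem angularFourierInv_comp_smul {c : ℝ} (hc : c ≠ 0) (h : V → E) (x : V) :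
    angularFourierInv (fun k => h (c • k)) x =
      (|c| ^ finrank ℝ V)⁻¹ • angularFourierInv h (c⁻¹ • x) := by
  simp only [angularFourierInv_eq_angularFourier_neg, angularFourier_comp_smul hc, smul_neg]
  rw [smul_comm]

theorem angularFourierInv_congr_ae {h₁ h₂ : V → E} (h : h₁ =ᵐ[volume] h₂) (x : V) :
    angularFourierInv h₁ x = angularFourierInv h₂ x := by
  refine congrArg _ (integral_congr_ae ?_)
  filter_upwards [h] with k hk
  rw [hk]

theorem fourierInv_comp_two_pi_smul (h : V → E) (x : V) :
    𝓕⁻ (fun k => h ((2 * Real.pi) • k)) x = angularFourierInv h x := by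
  rw [Real.fourierInv_eq_fourier_neg, fourier_eq_angularFourier,
    angularFourier_comp_smul Real.two_pi_pos.ne', inv_smul_smul₀ Real.two_pi_pos.ne',
    abs_of_pos Real.two_pi_pos,
    angularFourierInv_eq_angularFourier_neg]

theorem angularFourierInv_angularFourier [CompleteSpace E] {g : V → E} {x : V}
    (hg : Integrable g) (hFg : Integrable (angularFourier g)) (hx : ContinuousAt g x) :
    angularFourierInv (angularFourier g) x = g x := by
  have hfourier : 𝓕 g = fun k => angularFourier g ((2 * Real.pi) • k) :=
    funext (fourier_eq_angularFourier g)
  have hint : Integrable (𝓕 g) := hfourier ▸ hFg.comp_smul Real.two_pi_pos.ne'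
  rw [← fourierInv_comp_two_pi_smul, ← hfourier, hg.fourierInv_fourier_eq hint hx]

theorem integrable_exp_I_mul_inner_smul {h : V → E} (hh : Integrable h) (x : V) :
    Integrable fun k => exp (I * ((⟪k, x⟫ : ℝ) : ℂ)) • h k :=
  hh.bdd_smul 1 (Continuous.aestronglyMeasurable (by fun_prop))
    (.of_forall fun _ => (norm_exp_I_mul_ofReal _).le)

end AngularFourier

section ThreePoint

open Complex Module

variable {V W E : Type*} [NormedAddCommGroup V] [InnerProductSpace ℝ V] [NormedAddCommGroup W]
  [InnerProductSpace ℝ W]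

/-- The function `g_u` of the paper: the rotation-invariant function of two vectors given by `f`,
with the first vector fixed at `u`. -/
def threePointProfile (f : ℝ × ℝ → E) (u w : V) : E :=
  f (‖w‖ ^ 2, ‖w - u‖ ^ 2)

/-- The function `A` of the paper: the rotation-invariant three-point function of scaling weight
`dim V` determined by `f`, with one external point at the origin.
Its value at `z₁ = 0` is junk. -/
noncomputable def threePointFunction [SMul ℝ E] (f : ℝ × ℝ → E) (z₁ z₂ : V) : E :=
  (‖z₁‖ ^ finrank ℝ V)⁻¹ • f (‖z₂‖ ^ 2 / ‖z₁‖ ^ 2, ‖z₂ - z₁‖ ^ 2 / ‖z₁‖ ^ 2)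

theorem threePointProfile_map_map (R : V →ₗᵢ[ℝ] W) (f : ℝ × ℝ → E) (u w : V) :
    threePointProfile f (R u) (R w) = threePointProfile f u w := by
  simp only [threePointProfile, ← map_sub, R.norm_map]

theorem threePointFunction_eq_smul_threePointProfile [SMul ℝ E] (f : ℝ × ℝ → E)
    (z₁ z₂ : V) :
    threePointFunction f z₁ z₂ =
      (‖z₁‖ ^ finrank ℝ V)⁻¹ • threePointProfile f (‖z₁‖⁻¹ • z₁) (‖z₁‖⁻¹ • z₂) := by
  have hnorm (v : V) : ‖‖z₁‖⁻¹ • v‖ ^ 2 = ‖v‖ ^ 2 / ‖z₁‖ ^ 2 := by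
    rw [norm_smul, norm_inv, norm_norm, mul_pow, inv_pow, inv_mul_eq_div]
  simp only [threePointFunction, threePointProfile, ← smul_sub, hnorm]

variable [NormedAddCommGroup E] [NormedSpace ℂ E] [MeasurableSpace V] [BorelSpace V]
  [FiniteDimensional ℝ V]

theorem angularFourier_threePointProfile_swap (f : ℝ × ℝ → E) {u e : V} (h : ‖u‖ = ‖e‖) (c : ℝ) :
    angularFourier (threePointProfile f u) (c • e) =
      angularFourier (threePointProfile f e) (c • u) := by
  set R := Submodule.reflection (ℝ ∙ (u - e))ᗮ
  have hu : R u = e := Submodule.reflection_sub h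
  have he : R e = u := by rw [← hu, Submodule.reflection_reflection]
  have hprofile : threePointProfile f e ∘ R = threePointProfile f u :=
    funext fun w => by
      rw [← hu]
      exact threePointProfile_map_map R.toLinearIsometry f u w
  rw [← hprofile, angularFourier_comp_linearIsometryEquiv, map_smul, he]

theorem angularFourier_threePointFunction (f : ℝ × ℝ → E) {z : V} (hz : z ≠ 0) (p : V) :
    angularFourier (threePointFunction f z) p =
      angularFourier (threePointProfile f (‖z‖⁻¹ • z)) (‖z‖ • p) := by
  have hz' : ‖z‖ ≠ 0 := norm_ne_zero_iff.2 hz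
  rw [funext (threePointFunction_eq_smul_threePointProfile f z), angularFourier_const_smul,
    angularFourier_comp_smul (inv_ne_zero hz'), abs_inv, abs_norm, inv_inv, inv_pow, inv_inv,
    inv_smul_smul₀ (pow_ne_zero _ hz')]

theorem angularFourier_threePointFunction_swap (f : ℝ × ℝ → E) {z p : V} (hz : z ≠ 0)
    (hp : p ≠ 0) :
    angularFourier (threePointFunction f z) p =
      angularFourier (threePointProfile f (‖p‖⁻¹ • p)) (‖p‖ • z) := by
  have hz' : ‖z‖ ≠ 0 := norm_ne_zero_iff.2 hz
  have hp' : ‖p‖ ≠ 0 := norm_ne_zero_iff.2 hp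
  have hunit : ‖‖z‖⁻¹ • z‖ = ‖‖p‖⁻¹ • p‖ :=
    (norm_smul_inv_norm (𝕜 := ℝ) hz).trans (norm_smul_inv_norm (𝕜 := ℝ) hp).symm
  calc angularFourier (threePointFunction f z) p
      = angularFourier (threePointProfile f (‖z‖⁻¹ • z)) ((‖z‖ * ‖p‖) • ‖p‖⁻¹ • p) := by
        rw [angularFourier_threePointFunction f hz, mul_smul, smul_inv_smul₀ hp']
    _ = angularFourier (threePointProfile f (‖p‖⁻¹ • p)) ((‖z‖ * ‖p‖) • ‖z‖⁻¹ • z) :=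
        angularFourier_threePointProfile_swap f hunit _
    _ = angularFourier (threePointProfile f (‖p‖⁻¹ • p)) (‖p‖ • z) := by
        rw [mul_comm, mul_smul, smul_inv_smul₀ hz']

theorem three_point_self_duality_general [CompleteSpace E] (f : ℝ × ℝ → E) {p₁ : V}
    (hp₁ : p₁ ≠ 0) (p₂ : V)
    (hcont : ContinuousAt (threePointProfile f (‖p₁‖⁻¹ • p₁)) (‖p₁‖⁻¹ • p₂))
    (hint : Integrable (threePointProfile f (‖p₁‖⁻¹ • p₁)))
    (hftint : Integrable (angularFourier (threePointProfile f (‖p₁‖⁻¹ • p₁)))) :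
    Integrable (fun z₁ =>
      exp (I * ((⟪z₁, p₂⟫ : ℝ) : ℂ)) • angularFourier (threePointFunction f z₁) p₁) ∧
    angularFourierInv (fun z₁ => angularFourier (threePointFunction f z₁) p₁) p₂ =
      threePointFunction f p₁ p₂ := by
  have hp₁' : ‖p₁‖ ≠ 0 := norm_ne_zero_iff.2 hp₁
  have : Nontrivial V := ⟨p₁, 0, hp₁⟩
  have hswap : (fun z₁ => angularFourier (threePointFunction f z₁) p₁) =ᵐ[volume]
      fun z₁ => angularFourier (threePointProfile f (‖p₁‖⁻¹ • p₁)) (‖p₁‖ • z₁) := by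
    filter_upwards [Measure.ae_ne volume 0] with z hz
    exact angularFourier_threePointFunction_swap f hz hp₁
  refine ⟨integrable_exp_I_mul_inner_smul
    ((integrable_congr hswap).2 (hftint.comp_smul hp₁')) p₂, ?_⟩
  rw [angularFourierInv_congr_ae hswap, angularFourierInv_comp_smul hp₁', abs_norm,
    angularFourierInv_angularFourier hint hftint hcont,
    threePointFunction_eq_smul_threePointProfile]

end ThreePoint

/-- Self-duality of massless scalar three-point integrals: a rotation-invariant
function of scaling weight `D` with one external point at the origin equals its
own double Fourier transform in the two external variables. -/
theorem three_point_self_duality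
    (D : ℕ) (hD : 1 ≤ D) (f : ℝ × ℝ → ℂ)
    (hcont : ∀ u : EuclideanSpace ℝ (Fin D), ‖u‖ = 1 →
      Continuous (fun w : EuclideanSpace ℝ (Fin D) => f (‖w‖ ^ 2, ‖w - u‖ ^ 2)))
    (hint : ∀ u : EuclideanSpace ℝ (Fin D), ‖u‖ = 1 →
      Integrable (fun w : EuclideanSpace ℝ (Fin D) => f (‖w‖ ^ 2, ‖w - u‖ ^ 2)))
    (hftint : ∀ u : EuclideanSpace ℝ (Fin D), ‖u‖ = 1 →
      Integrable (fun k : EuclideanSpace ℝ (Fin D) =>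
        ∫ w : EuclideanSpace ℝ (Fin D),
          Complex.exp (-Complex.I * ((⟪w, k⟫ : ℝ) : ℂ)) * f (‖w‖ ^ 2, ‖w - u‖ ^ 2))) :
    let A : EuclideanSpace ℝ (Fin D) → EuclideanSpace ℝ (Fin D) → ℂ :=
      fun z₁ z₂ => (((‖z₁‖ ^ D)⁻¹ : ℝ) : ℂ) *
        f (‖z₂‖ ^ 2 / ‖z₁‖ ^ 2, ‖z₂ - z₁‖ ^ 2 / ‖z₁‖ ^ 2)
    ∀ p₁ p₂ : EuclideanSpace ℝ (Fin D), p₁ ≠ 0 →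
      Integrable (fun z₁ : EuclideanSpace ℝ (Fin D) =>
        Complex.exp (Complex.I * ((⟪z₁, p₂⟫ : ℝ) : ℂ)) *
          ∫ z₂ : EuclideanSpace ℝ (Fin D),
            Complex.exp (-Complex.I * ((⟪z₂, p₁⟫ : ℝ) : ℂ)) * A z₁ z₂) ∧
      ((((2 * Real.pi) ^ D)⁻¹ : ℝ) : ℂ) *
          ∫ z₁ : EuclideanSpace ℝ (Fin D),
            Complex.exp (Complex.I * ((⟪z₁, p₂⟫ : ℝ) : ℂ)) *
              ∫ z₂ : EuclideanSpace ℝ (Fin D),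
                Complex.exp (-Complex.I * ((⟪z₂, p₁⟫ : ℝ) : ℂ)) * A z₁ z₂
        = A p₁ p₂ := by
  intro _ p₁ p₂ hp₁
  have hunit : ‖‖p₁‖⁻¹ • p₁‖ = 1 := norm_smul_inv_norm (𝕜 := ℝ) hp₁
  simpa only [angularFourier, angularFourierInv, threePointFunction, finrank_euclideanSpace_fin,
    Complex.real_smul, smul_eq_mul] using three_point_self_duality_general f hp₁ p₂
      (hcont _ hunit).continuousAt (hint _ hunit) (hftint _ hunit)
end
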